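/- Let c ∈ ℝ with c ≠ 0, and consider the eight polynomial vector fields on ℝ² (coordinates (u,v)): X₀ = ∂_v, X₁ = u∂_v, X₂ = (cu² + v)∂_v, X₃ = v∂_u − (3cuv + c²u³)∂_v, X₄ = cu²∂_u + cu(v − cu²)∂_v, X₅ = cu(v + cu²)∂_u + c(v² − c²u⁴)∂_v, X₆ = u∂_u + 2v∂_v, X₇ = ∂_u. Then their real span V is closed under the Lie bracket of vector fields, dim V = 8, and V is isomorphic as a real Lie algebra to sl(3,ℝ), the Lie algebra of traceless real 3×3 matrices with the commutator bracket. -/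

import Mathlib

/-!
In the coordinates `x = u`, `w = v + c u²` the eight fields become infinitesimal projective
transformations of the plane: they are the chart expressions, at homogeneous coordinates
`[1 : x : w]`, of linear vector fields `ẏ = B y` on `ℝ³`, and scalar matrices act trivially.
The bracket of the linear fields of `A` and `B` is the field of `B A - A B`, so sending a
traceless `A` to the projective field of `-A` (`projField`) preserves brackets
(`lieBr2_projField`). This map is injective on traceless matrices (`slField_injective`), and its
range is exactly `V2RC c` (`range_slField`; here `c ≠ 0` lets one divide by `c` to reach the two
quadratic projective fields). Closure, the dimension `9 - 1` and the isomorphism all follow.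
-/

/-- The Lie bracket of vector fields on the plane, identified with smooth maps
`ℝ² → ℝ²`: `[X,Y](p) = (DY)_p(X(p)) - (DX)_p(Y(p))`. -/
noncomputable def lieBr2 (X Y : ℝ × ℝ → ℝ × ℝ) : ℝ × ℝ → ℝ × ℝ :=
  fun p => fderiv ℝ Y p (X p) - fderiv ℝ X p (Y p)

/-- The Vessiot–Guldberg Lie algebra `V₂^RC` of the second-order Riccati chain equation
with parameter `c`: the real span of the eight polynomial vector fields
`X₀ = ∂_v`, `X₁ = u∂_v`, `X₂ = (cu² + v)∂_v`, `X₃ = v∂_u - (3cuv + c²u³)∂_v`,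
`X₄ = cu²∂_u + cu(v - cu²)∂_v`, `X₅ = cu(v + cu²)∂_u + c(v² - c²u⁴)∂_v`,
`X₆ = u∂_u + 2v∂_v`, `X₇ = ∂_u` (coordinates `p = (u, v)`). -/
noncomputable def V2RC (c : ℝ) : Submodule ℝ (ℝ × ℝ → ℝ × ℝ) :=
  Submodule.span ℝ
    {fun _ => ((0 : ℝ), (1 : ℝ)),
     fun p => ((0 : ℝ), p.1),
     fun p => ((0 : ℝ), c * p.1 ^ 2 + p.2),
     fun p => (p.2, -(3 * c * p.1 * p.2 + c ^ 2 * p.1 ^ 3)),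
     fun p => (c * p.1 ^ 2, c * p.1 * (p.2 - c * p.1 ^ 2)),
     fun p => (c * p.1 * (p.2 + c * p.1 ^ 2), c * (p.2 ^ 2 - c ^ 2 * p.1 ^ 4)),
     fun p => (p.1, 2 * p.2),
     fun _ => ((1 : ℝ), (0 : ℝ))}

/-- The vector field on the `(u, v)`-plane induced by the linear field `ẏ = -A y` on `ℝ³` via
`u = y₁ / y₀`, `v + c u² = y₂ / y₀`. Its components are
`u̇ = ẏ₁ - u ẏ₀` and `v̇ = ẏ₂ - (v + c u²) ẏ₀ - 2 c u u̇`, evaluated at `y = (1, u, v + c u²)`. -/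
noncomputable def projField (c : ℝ) :
    Matrix (Fin 3) (Fin 3) ℝ →ₗ[ℝ] (ℝ × ℝ → ℝ × ℝ) where
  toFun A := fun p =>
    (-(A 1 0 + A 1 1 * p.1 + A 1 2 * (p.2 + c * p.1 ^ 2))
        + p.1 * (A 0 0 + A 0 1 * p.1 + A 0 2 * (p.2 + c * p.1 ^ 2)),
      -(A 2 0 + A 2 1 * p.1 + A 2 2 * (p.2 + c * p.1 ^ 2))
        + (p.2 + c * p.1 ^ 2) * (A 0 0 + A 0 1 * p.1 + A 0 2 * (p.2 + c * p.1 ^ 2))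
        - 2 * c * p.1 * (-(A 1 0 + A 1 1 * p.1 + A 1 2 * (p.2 + c * p.1 ^ 2))
        + p.1 * (A 0 0 + A 0 1 * p.1 + A 0 2 * (p.2 + c * p.1 ^ 2))))
  map_add' A B := by
    funext p
    ext <;> simp <;> ring
  map_smul' r A := by
    funext p
    ext <;> simp <;> ring

lemma projField_apply (c : ℝ) (A : Matrix (Fin 3) (Fin 3) ℝ) (p : ℝ × ℝ) :
    projField c A p =
    (-(A 1 0 + A 1 1 * p.1 + A 1 2 * (p.2 + c * p.1 ^ 2))
        + p.1 * (A 0 0 + A 0 1 * p.1 + A 0 2 * (p.2 + c * p.1 ^ 2)),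
      -(A 2 0 + A 2 1 * p.1 + A 2 2 * (p.2 + c * p.1 ^ 2))
        + (p.2 + c * p.1 ^ 2) * (A 0 0 + A 0 1 * p.1 + A 0 2 * (p.2 + c * p.1 ^ 2))
        - 2 * c * p.1 * (-(A 1 0 + A 1 1 * p.1 + A 1 2 * (p.2 + c * p.1 ^ 2))
        + p.1 * (A 0 0 + A 0 1 * p.1 + A 0 2 * (p.2 + c * p.1 ^ 2)))) := rfl

/-- The directional derivative of `projField c A` at `p` along `q`, with `w = v + c u²`
differentiating to `q.2 + 2 c u q.1`. -/
lemma fderiv_projField (c : ℝ) (A : Matrix (Fin 3) (Fin 3) ℝ) (p q : ℝ × ℝ) :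
    fderiv ℝ (projField c A) p q =
    (-(A 1 1 * q.1 + A 1 2 * (q.2 + 2 * c * p.1 * q.1))
        + q.1 * (A 0 0 + A 0 1 * p.1 + A 0 2 * (p.2 + c * p.1 ^ 2))
        + p.1 * (A 0 1 * q.1 + A 0 2 * (q.2 + 2 * c * p.1 * q.1)),
      -(A 2 1 * q.1 + A 2 2 * (q.2 + 2 * c * p.1 * q.1))
        + (q.2 + 2 * c * p.1 * q.1) * (A 0 0 + A 0 1 * p.1 + A 0 2 * (p.2 + c * p.1 ^ 2))
        + (p.2 + c * p.1 ^ 2) * (A 0 1 * q.1 + A 0 2 * (q.2 + 2 * c * p.1 * q.1))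
        - 2 * c * q.1 * (-(A 1 0 + A 1 1 * p.1 + A 1 2 * (p.2 + c * p.1 ^ 2))
          + p.1 * (A 0 0 + A 0 1 * p.1 + A 0 2 * (p.2 + c * p.1 ^ 2)))
        - 2 * c * p.1 * (-(A 1 1 * q.1 + A 1 2 * (q.2 + 2 * c * p.1 * q.1))
          + q.1 * (A 0 0 + A 0 1 * p.1 + A 0 2 * (p.2 + c * p.1 ^ 2))
          + p.1 * (A 0 1 * q.1 + A 0 2 * (q.2 + 2 * c * p.1 * q.1)))) := by
  have hu : HasFDerivAt (fun z : ℝ × ℝ => z.1) (ContinuousLinearMap.fst ℝ ℝ ℝ) p := hasFDerivAt_fst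
  have hv : HasFDerivAt (fun z : ℝ × ℝ => z.2) (ContinuousLinearMap.snd ℝ ℝ ℝ) p := hasFDerivAt_snd
  have hw := hv.fun_add ((hu.pow 2).const_mul c)
  have row := fun i : Fin 3 =>
    (((hasFDerivAt_const (A i 0) p).fun_add (hu.const_mul (A i 1))).fun_add
      (hw.const_mul (A i 2)))
  have h1 := (row 1).fun_neg.fun_add (hu.fun_mul (row 0))
  have h2 := ((row 2).fun_neg.fun_add (hw.fun_mul (row 0))).fun_sub
    ((hu.const_mul (2 * c)).fun_mul h1)
  have h : HasFDerivAt (projField c A) _ p := h1.prodMk h2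
  rw [h.fderiv]
  ext <;> simp <;> ring

lemma lieBr2_projField (c : ℝ) (A B : Matrix (Fin 3) (Fin 3) ℝ) :
    lieBr2 (projField c A) (projField c B) = projField c (A * B - B * A) := by
  funext p
  simp only [lieBr2, fderiv_projField, projField_apply, Matrix.sub_apply,
    Matrix.mul_apply, Fin.sum_univ_three]
  ext <;> simp only [Prod.fst_sub, Prod.snd_sub] <;> ring

/-- The restriction of `projField c` to traceless matrices. -/
noncomputable def slField (c : ℝ) :
    LieAlgebra.SpecialLinear.sl (Fin 3) ℝ →ₗ[ℝ] (ℝ × ℝ → ℝ × ℝ) where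
  toFun A := projField c A.1
  map_add' A B := (projField c).map_add A.1 B.1
  map_smul' r A := (projField c).map_smul r A.1

lemma slField_apply (c : ℝ) (A : LieAlgebra.SpecialLinear.sl (Fin 3) ℝ) :
    slField c A = projField c A.1 := rfl

lemma mem_sl_iff (A : Matrix (Fin 3) (Fin 3) ℝ) :
    A ∈ LieAlgebra.SpecialLinear.sl (Fin 3) ℝ ↔ A.trace = 0 := Iff.rfl

lemma slField_injective (c : ℝ) : Function.Injective (slField c) := by
  rw [← LinearMap.ker_eq_bot, LinearMap.ker_eq_bot']
  rintro ⟨A, hA⟩ h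
  rw [mem_sl_iff, Matrix.trace_fin_three] at hA
  have ev : ∀ p : ℝ × ℝ, projField c A p = 0 := fun p => congrFun h p
  -- The five points `(x, w) = (0, 0), (0, ±1), (±1, 0)`, where `v = w - c x²`.
  have e0 := ev (0, 0)
  have e1 := ev (0, 1)
  have e2 := ev (0, -1)
  have e3 := ev (1, -c)
  have e4 := ev (-1, -c)
  simp [projField_apply, Prod.ext_iff] at e0 e1 e2 e3 e4
  obtain ⟨a0, b0⟩ := e0
  obtain ⟨a1, b1⟩ := e1
  obtain ⟨a2, b2⟩ := e2
  obtain ⟨a3, b3⟩ := e3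
  obtain ⟨a4, b4⟩ := e4
  rw [a3] at b3
  rw [a4] at b4
  apply Subtype.ext
  ext i j
  fin_cases i <;> fin_cases j <;> simp <;> linarith

lemma range_slField (c : ℝ) (hc : c ≠ 0) : LinearMap.range (slField c) = V2RC c := by
  apply le_antisymm
  · rintro _ ⟨⟨A, hA⟩, rfl⟩
    rw [slField_apply]
    simp only [V2RC, Submodule.mem_span_insert, Submodule.mem_span_singleton]
    refine ⟨-A 2 0, _, ⟨-A 2 1 + 2 * c * A 1 0, _, ⟨-A 2 2 - A 0 0 + 2 * A 1 1, _, ⟨-A 1 2, _,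
      ⟨-A 1 2 + A 0 1 / c, _, ⟨A 0 2 / c, _, ⟨A 0 0 - A 1 1, _, ⟨-A 1 0, rfl⟩, rfl⟩, rfl⟩, rfl⟩,
      rfl⟩, rfl⟩, rfl⟩, ?_⟩
    funext p
    ext <;> simp [projField_apply] <;> field_simp <;> ring
  · have key : ∀ (A : Matrix (Fin 3) (Fin 3) ℝ) (X : ℝ × ℝ → ℝ × ℝ), A.trace = 0 →
        projField c A = X → X ∈ LinearMap.range (slField c) :=
      fun A X hA hX => ⟨⟨A, hA⟩, hX⟩
    rw [V2RC, Submodule.span_le]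
    rintro X (rfl | rfl | rfl | rfl | rfl | rfl | rfl | rfl)
    · refine key !![0, 0, 0; 0, 0, 0; -1, 0, 0] _ ?_ ?_
      · simp [Matrix.trace_fin_three]
      · funext p
        ext <;> simp [projField_apply]
    · refine key !![0, 0, 0; 0, 0, 0; 0, -1, 0] _ ?_ ?_
      · simp [Matrix.trace_fin_three]
      · funext p
        ext <;> simp [projField_apply]
    · refine key !![1/3, 0, 0; 0, 1/3, 0; 0, 0, -2/3] _ ?_ ?_
      · simp [Matrix.trace_fin_three]
        norm_num
      · funext p
        ext <;> simp [projField_apply] <;> ring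
    · refine key !![0, -c, 0; 0, 0, -1; 0, 0, 0] _ ?_ ?_
      · simp [Matrix.trace_fin_three]
      · funext p
        ext <;> simp [projField_apply] <;> ring
    · refine key !![0, c, 0; 0, 0, 0; 0, 0, 0] _ ?_ ?_
      · simp [Matrix.trace_fin_three]
      · funext p
        ext <;> simp [projField_apply] <;> ring
    · refine key !![0, 0, c; 0, 0, 0; 0, 0, 0] _ ?_ ?_
      · simp [Matrix.trace_fin_three]
      · funext p
        ext <;> simp [projField_apply] <;> ring
    · refine key !![1, 0, 0; 0, 0, 0; 0, 0, -1] _ ?_ ?_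
      · simp [Matrix.trace_fin_three]
      · funext p
        ext <;> simp [projField_apply] <;> ring
    · refine key !![0, 0, 0; -1, 0, 0; 0, -2 * c, 0] _ ?_ ?_
      · simp [Matrix.trace_fin_three]
      · funext p
        ext <;> simp [projField_apply]

lemma finrank_sl_three : Module.finrank ℝ (LieAlgebra.SpecialLinear.sl (Fin 3) ℝ) = 8 := by
  have h := LinearMap.finrank_range_add_finrank_ker (Matrix.traceLinearMap (Fin 3) ℝ ℝ)
  have hs : LinearMap.range (Matrix.traceLinearMap (Fin 3) ℝ ℝ) = ⊤ := by
    rw [LinearMap.range_eq_top]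
    intro r
    exact ⟨!![r, 0, 0; 0, 0, 0; 0, 0, 0], by simp [Matrix.trace_fin_three]⟩
  rw [hs, finrank_top, Module.finrank_self, Module.finrank_matrix] at h
  simp only [Fintype.card_fin, Module.finrank_self] at h
  have h' : Module.finrank ℝ (LinearMap.ker (Matrix.traceLinearMap (Fin 3) ℝ ℝ)) = 8 := by omega
  exact h'

lemma lieBr2_slField (c : ℝ) (A B : LieAlgebra.SpecialLinear.sl (Fin 3) ℝ) :
    lieBr2 (slField c A) (slField c B) = slField c ⁅A, B⁆ :=
  lieBr2_projField c A.1 B.1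

/-- For `c ≠ 0`, the span `V` of the eight vector fields `X₀, …, X₇` is closed under the
Lie bracket of vector fields, has dimension `8`, and is isomorphic as a real Lie algebra
to `sl(3,ℝ)` (traceless real `3×3` matrices with the commutator bracket), via a
bracket-preserving linear equivalence. -/
theorem V2RC_isomorphic_sl3 (c : ℝ) (hc : c ≠ 0) :
    (∀ X ∈ V2RC c, ∀ Y ∈ V2RC c, lieBr2 X Y ∈ V2RC c) ∧
    Module.finrank ℝ (V2RC c) = 8 ∧
    (∃ e : V2RC c ≃ₗ[ℝ] LieAlgebra.SpecialLinear.sl (Fin 3) ℝ,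
      ∀ (X Y : V2RC c) (h : lieBr2 X.1 Y.1 ∈ V2RC c),
        e ⟨lieBr2 X.1 Y.1, h⟩ = ⁅e X, e Y⁆) := by
  rw [← range_slField c hc]
  let f := LinearEquiv.ofInjective (slField c) (slField_injective c)
  refine ⟨?_, ?_, f.symm, ?_⟩
  · rintro _ ⟨A, rfl⟩ _ ⟨B, rfl⟩
    exact ⟨⁅A, B⁆, (lieBr2_slField c A B).symm⟩
  · rw [← f.finrank_eq, finrank_sl_three]
  · intro X Y h
    obtain ⟨A, rfl⟩ := f.surjective X
    obtain ⟨B, rfl⟩ := f.surjective Y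
    rw [LinearEquiv.symm_apply_eq, f.symm_apply_apply, f.symm_apply_apply]
    exact Subtype.ext (lieBr2_slField c A B)
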